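/- Let 𝔥 be a complex Hilbert space which is not of dimension two and let d be a completely additive decoherence functional for 𝔥. Then there exists a trace class operator 𝔛 on 𝔥 ⊗ 𝔥 such that d(p,q) = tr((p ⊗ q)𝔛) for ALL projections p,q on 𝔥 if, and only if, d is tensor bounded. -/

import Mathlib

/- Common background definitions: decoherence functionals on the projection
lattice of a complex Hilbert space, boundedness/additivity notions, trace class
operators, and an axiomatisation of the Hilbert space tensor product
`𝔥 ⊗ 𝔥` together with the operator tensor product. -/

noncomputable section

open scoped ComplexInnerProductSpace ComplexOrder
open ContinuousLinearMap

universe u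

variable {E : Type u} [NormedAddCommGroup E] [InnerProductSpace ℂ E] [CompleteSpace E]
variable {G : Type u} [NormedAddCommGroup G] [InnerProductSpace ℂ G] [CompleteSpace G]

/-- `p` is an orthogonal projection on a Hilbert space. -/
def IsOrthoProj (p : E →L[ℂ] E) : Prop :=
  IsIdempotentElem p ∧ IsSelfAdjoint p

/-- `p` is an operator of finite rank. -/
def HasFiniteRank (p : E →L[ℂ] E) : Prop :=
  FiniteDimensional ℂ ↥(LinearMap.range (p : E →ₗ[ℂ] E))

/-- A decoherence functional on the lattice of projections `P(𝔥)`
(modelled as a function on all pairs of bounded operators whose defining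
properties refer only to its values at pairs of orthogonal projections). -/
structure IsDecoherenceFunctional (d : (E →L[ℂ] E) → (E →L[ℂ] E) → ℂ) : Prop where
  hermitian : ∀ p q, IsOrthoProj p → IsOrthoProj q → d p q = starRingEnd ℂ (d q p)
  pos : ∀ p, IsOrthoProj p → 0 ≤ d p p
  normalized : d 1 1 = 1
  orthoadd : ∀ p₁ p₂ q, IsOrthoProj p₁ → IsOrthoProj p₂ → IsOrthoProj q →
    p₁ * p₂ = 0 → d (p₁ + p₂) q = d p₁ q + d p₂ q

/-- A decoherence functional is bounded if `{|d(p,q)|}` is a bounded set. -/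
def DFBounded (d : (E →L[ℂ] E) → (E →L[ℂ] E) → ℂ) : Prop :=
  ∃ C : ℝ, ∀ p q, IsOrthoProj p → IsOrthoProj q → ‖d p q‖ ≤ C

/-- Countable additivity of a decoherence functional: for every countable
pairwise orthogonal family of projections summing (strongly) to `P`,
`d (P, q) = ∑ d (pᵢ, q)`. -/
def DFCountablyAdditive (d : (E →L[ℂ] E) → (E →L[ℂ] E) → ℂ) : Prop :=
  ∀ (p : ℕ → E →L[ℂ] E) (P q : E →L[ℂ] E),
    (∀ i, IsOrthoProj (p i)) → IsOrthoProj P → IsOrthoProj q →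
    (∀ i j, i ≠ j → p i * p j = 0) →
    (∀ x : E, HasSum (fun i => p i x) (P x)) →
    HasSum (fun i => d (p i) q) (d P q)

/-- Complete additivity of a decoherence functional. -/
def DFCompletelyAdditive (d : (E →L[ℂ] E) → (E →L[ℂ] E) → ℂ) : Prop :=
  ∀ (ι : Type u) (p : ι → E →L[ℂ] E) (P q : E →L[ℂ] E),
    (∀ i, IsOrthoProj (p i)) → IsOrthoProj P → IsOrthoProj q →
    (∀ i j, i ≠ j → p i * p j = 0) →
    (∀ x : E, HasSum (fun i => p i x) (P x)) →
    HasSum (fun i => d (p i) q) (d P q)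

/-- A bilinear form `D` on `B(𝔥) × B(𝔥)` is bounded. -/
def IsBoundedBilinear (D : (E →L[ℂ] E) →ₗ[ℂ] (E →L[ℂ] E) →ₗ[ℂ] ℂ) : Prop :=
  ∃ C : ℝ, ∀ x y : E →L[ℂ] E, ‖D x y‖ ≤ C * ‖x‖ * ‖y‖

/-- The bilinear form `D` extends the decoherence functional `d`. -/
def ExtendsDF (D : (E →L[ℂ] E) →ₗ[ℂ] (E →L[ℂ] E) →ₗ[ℂ] ℂ)
    (d : (E →L[ℂ] E) → (E →L[ℂ] E) → ℂ) : Prop :=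
  ∀ p q, IsOrthoProj p → IsOrthoProj q → D p q = d p q

/-- `T` is a trace class operator (via the standard characterisation: the sums
`∑ |⟪eᵢ, T fᵢ⟫|` over finite orthonormal families are uniformly bounded). -/
def IsTraceClass (T : E →L[ℂ] E) : Prop :=
  ∃ C : ℝ, ∀ (n : ℕ) (e f : Fin n → E), Orthonormal ℂ e → Orthonormal ℂ f →
    ∑ i, ‖⟪e i, T (f i)⟫‖ ≤ C

/-- The trace of an operator computed in the Hilbert basis `b` (for a trace
class operator this is basis independent and is the usual trace). -/
def traceAlong {ι : Type*} (b : HilbertBasis ι ℂ E) (T : E →L[ℂ] E) : ℂ :=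
  ∑' i, ⟪b i, T (b i)⟫

/-- The rank one orthogonal projection `p_ξ` onto the span of a unit vector `ξ`. -/
def rankOneProj (ξ : E) : E →L[ℂ] E :=
  (innerSL ℂ ξ).smulRight ξ

/-- An axiomatisation of the Hilbert space tensor product `G = E ⊗ E`:
a bilinear map `tmul` into `G` multiplying inner products and having dense span. -/
structure HilbertTensorProduct (E G : Type u) [NormedAddCommGroup E]
    [InnerProductSpace ℂ E] [NormedAddCommGroup G] [InnerProductSpace ℂ G] :
    Type u where
  tmul : E →ₗ[ℂ] E →ₗ[ℂ] G
  inner_tmul : ∀ a b c d : E, ⟪tmul a b, tmul c d⟫ = ⟪a, c⟫ * ⟪b, d⟫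
  dense_span : Dense (↑(Submodule.span ℂ (Set.range fun z : E × E => tmul z.1 z.2)) : Set G)

/-- The algebraic tensor product `E ⊗_alg E`, viewed as a (dense) subspace of `G`. -/
def HilbertTensorProduct.algSpan (J : HilbertTensorProduct E G) : Submodule ℂ G :=
  Submodule.span ℂ (Set.range fun z : E × E => J.tmul z.1 z.2)

/-- The Hilbert space tensor product together with the operator tensor product
`(x, y) ↦ x ⊗ y` on bounded operators. -/
structure OperatorTensor (E G : Type u) [NormedAddCommGroup E]
    [InnerProductSpace ℂ E] [NormedAddCommGroup G] [InnerProductSpace ℂ G]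
    extends HilbertTensorProduct E G where
  op : (E →L[ℂ] E) → (E →L[ℂ] E) → (G →L[ℂ] G)
  op_tmul : ∀ (x y : E →L[ℂ] E) (a b : E), op x y (tmul a b) = tmul (x a) (y b)

/-- The algebraic tensor product `K(𝔥) • K(𝔥)`: the span in `B(G)` of the
operators `x ⊗ y` with `x, y` compact. -/
def OperatorTensor.compactSpan (J : OperatorTensor E G) : Submodule ℂ (G →L[ℂ] G) :=
  Submodule.span ℂ {T | ∃ x y : E →L[ℂ] E,
    IsCompactOperator (⇑x) ∧ IsCompactOperator (⇑y) ∧ T = J.op x y}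

/-- `β` is the linear functional on `K(𝔥) • K(𝔥)` induced by the bilinear form
`D`, i.e. `β (x ⊗ y) = D (x, y)` for compact `x, y`. -/
def IsBetaFor (J : OperatorTensor E G)
    (D : (E →L[ℂ] E) →ₗ[ℂ] (E →L[ℂ] E) →ₗ[ℂ] ℂ)
    (β : ↥J.compactSpan →ₗ[ℂ] ℂ) : Prop :=
  ∀ x y : E →L[ℂ] E, IsCompactOperator (⇑x) → IsCompactOperator (⇑y) →
    ∀ hm : J.op x y ∈ J.compactSpan, β ⟨J.op x y, hm⟩ = D x y

/-- `β` is bounded for the operator norm (inherited from `B(G)`). -/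
def BetaNormBounded (J : OperatorTensor E G) (β : ↥J.compactSpan →ₗ[ℂ] ℂ) : Prop :=
  ∃ C : ℝ, ∀ S : J.compactSpan, ‖β S‖ ≤ C * ‖(S : G →L[ℂ] G)‖

/-- A decoherence functional is tensor bounded if its associated functional `β`
on `K(𝔥) • K(𝔥)` is bounded for the (pre-)C*-norm. -/
def IsTensorBounded (J : OperatorTensor E G)
    (d : (E →L[ℂ] E) → (E →L[ℂ] E) → ℂ) : Prop :=
  ∃ D, IsBoundedBilinear D ∧ ExtendsDF D d ∧
    ∃ β, IsBetaFor J D β ∧ BetaNormBounded J β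

/-- `β` is uniformly bounded on the projections `p_ξ`, `ξ` a unit vector of the
algebraic tensor product `𝔥 ⊗_alg 𝔥`. -/
def BetaTraciallyBounded (J : OperatorTensor E G) (β : ↥J.compactSpan →ₗ[ℂ] ℂ) : Prop :=
  ∃ C : ℝ, ∀ ξ : G, ξ ∈ J.toHilbertTensorProduct.algSpan → ‖ξ‖ = 1 →
    ∀ hm : rankOneProj ξ ∈ J.compactSpan, ‖β ⟨rankOneProj ξ, hm⟩‖ ≤ C

/-- A decoherence functional is tracially bounded if it is bounded and its
associated functional `β` is uniformly bounded on rank one projections `p_ξ`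
with `ξ` a unit vector in `𝔥 ⊗_alg 𝔥`. -/
def IsTraciallyBounded (J : OperatorTensor E G)
    (d : (E →L[ℂ] E) → (E →L[ℂ] E) → ℂ) : Prop :=
  DFBounded d ∧ ∃ D, IsBoundedBilinear D ∧ ExtendsDF D d ∧
    ∃ β, IsBetaFor J D β ∧ BetaTraciallyBounded J β

/-!
A tensor bounded `d` extends by Hahn–Banach to a bounded functional on `B(𝔥 ⊗ 𝔥)`, whose values on
rank one operators are the matrix coefficients of a trace class operator `X`. So
`d(p, q) = tr ((p ⊗ q) X)` holds for `p`, `q` of rank one. For arbitrary projections choose Hilbert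
bases `(eᵢ)`, `(fⱼ)` with every `eᵢ` in the range or the kernel of `p`, and likewise for `fⱼ` and
`q`. In the basis `(eᵢ ⊗ fⱼ)` the trace of `(p ⊗ q) X` is the double sum of
`d(p |eᵢ⟩⟨eᵢ|, q |fⱼ⟩⟨fⱼ|)`, which complete additivity in each argument evaluates to `d(p, q)`.
The analytic input is that the trace does not depend on the basis: for positive operators this is
Parseval's identity, and a self-adjoint trace class `T` is the difference of `|T| + T` and `|T|`.
-/

open InnerProductSpace (rankOne)

section RankOne

variable {H : Type*} [NormedAddCommGroup H] [InnerProductSpace ℂ H]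

lemma isCompactOperator_rankOne (x y : H) : IsCompactOperator (rankOne ℂ x y) := by
  rw [InnerProductSpace.rankOne_def']
  exact (isCompactOperator_of_locallyCompactSpace_dom (innerSL ℂ y)).clm_comp
    (ContinuousLinearMap.toSpanSingleton ℂ x)

lemma norm_sum_smul_rankOne_le_one {ι : Type*} {e f : ι → H} (he : Orthonormal ℂ e)
    (hf : Orthonormal ℂ f) {θ : ι → ℂ} (hθ : ∀ i, ‖θ i‖ ≤ 1) (s : Finset ι) :
    ‖∑ i ∈ s, θ i • rankOne ℂ (f i) (e i)‖ ≤ 1 := by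
  refine opNorm_le_bound _ zero_le_one fun x => le_of_sq_le_sq ?_ (by positivity)
  calc ‖(∑ i ∈ s, θ i • rankOne ℂ (f i) (e i)) x‖ ^ 2
      = ‖∑ i ∈ s, (θ i * ⟪e i, x⟫) • f i‖ ^ 2 := by simp [smul_smul]
    _ = ∑ i ∈ s, ‖θ i * ⟪e i, x⟫‖ ^ 2 :=
        hf.orthogonalFamily.norm_sum (fun i => θ i * ⟪e i, x⟫) s
    _ ≤ ∑ i ∈ s, ‖⟪e i, x⟫‖ ^ 2 := by
        gcongr with i
        rw [norm_mul]
        exact mul_le_of_le_one_left (norm_nonneg _) (hθ i)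
    _ ≤ (1 * ‖x‖) ^ 2 := by simpa using he.sum_inner_products_le x

end RankOne

section HilbertBases

variable {H : Type*} [NormedAddCommGroup H] [InnerProductSpace ℂ H]

lemma tsum_enorm_inner_sq {ι : Type*} (b : HilbertBasis ι ℂ H) (x : H) :
    ∑' i, ‖⟪b i, x⟫‖ₑ ^ 2 = ‖x‖ₑ ^ 2 := by
  have hsum : HasSum (fun i => ‖⟪b i, x⟫‖ ^ 2) (‖x‖ ^ 2) := by
    have hterm (i : ι) : ⟪x, b i⟫ * ⟪b i, x⟫ = (‖⟪b i, x⟫‖ ^ 2 : ℝ) := by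
      rw [← inner_conj_symm, Complex.conj_mul', Complex.ofReal_pow]
    simpa [hterm, inner_self_eq_norm_sq_to_K, ← Complex.ofReal_pow, Complex.hasSum_ofReal,
      -map_pow] using! b.hasSum_inner_mul_inner x x
  simp only [← ofReal_norm, ← ENNReal.ofReal_pow (norm_nonneg _)]
  rw [← ENNReal.ofReal_tsum_of_nonneg (fun _ => by positivity) hsum.summable, hsum.tsum_eq]

variable [CompleteSpace H]

lemma tsum_enorm_apply_sq_eq_adjoint {ι κ : Type*} (b : HilbertBasis ι ℂ H)
    (c : HilbertBasis κ ℂ H) (A : H →L[ℂ] H) :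
    ∑' i, ‖A (b i)‖ₑ ^ 2 = ∑' j, ‖adjoint A (c j)‖ₑ ^ 2 :=
  calc ∑' i, ‖A (b i)‖ₑ ^ 2 = ∑' i, ∑' j, ‖⟪c j, A (b i)⟫‖ₑ ^ 2 := by
        simp only [tsum_enorm_inner_sq c]
    _ = ∑' j, ∑' i, ‖⟪b i, adjoint A (c j)⟫‖ₑ ^ 2 := by
        rw [ENNReal.tsum_comm]
        refine tsum_congr fun j => tsum_congr fun i => ?_
        rw [adjoint_inner_right, ← ofReal_norm, norm_inner_symm, ofReal_norm]
    _ = ∑' j, ‖adjoint A (c j)‖ₑ ^ 2 := by simp only [tsum_enorm_inner_sq b]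

lemma traceAlong_adjoint_comp_self {ι : Type*} (b : HilbertBasis ι ℂ H) (A : H →L[ℂ] H) :
    traceAlong b (adjoint A ∘L A) = ((∑' i, ‖A (b i)‖ₑ ^ 2).toReal : ℂ) := by
  rw [ENNReal.tsum_toReal_eq fun i => by finiteness, Complex.ofReal_tsum, traceAlong]
  simp [adjoint_inner_right, inner_self_eq_norm_sq_to_K]

lemma traceAlong_eq_of_nonneg {ι κ : Type*} (b : HilbertBasis ι ℂ H) (c : HilbertBasis κ ℂ H)
    {T : H →L[ℂ] H} (hT : 0 ≤ T) : traceAlong b T = traceAlong c T := by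
  obtain ⟨A, rfl⟩ := CStarAlgebra.nonneg_iff_eq_star_mul_self.1 hT
  change traceAlong b (adjoint A ∘L A) = traceAlong c (adjoint A ∘L A)
  rw [traceAlong_adjoint_comp_self, traceAlong_adjoint_comp_self,
    tsum_enorm_apply_sq_eq_adjoint b b, tsum_enorm_apply_sq_eq_adjoint c b]

lemma exists_hilbertBasis_mem_or_mem_orthogonal (M : Submodule ℂ H) [CompleteSpace M] :
    ∃ (w : Set H) (b : HilbertBasis w ℂ H), ∀ i, b i ∈ M ∨ b i ∈ Mᗮ := by
  obtain ⟨v, c, hc⟩ := exists_hilbertBasis ℂ M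
  have hv : Orthonormal ℂ ((↑) : Subtype.val '' v → H) := by
    have := (c.orthonormal.comp_linearIsometry M.subtypeₗᵢ).toSubtypeRange
    rwa [Set.range_comp, hc, Subtype.range_coe] at this
  obtain ⟨w, b, hvw, hb⟩ := hv.exists_hilbertBasis_extension
  refine ⟨w, b, fun i => or_iff_not_imp_left.2 fun hi => ?_⟩
  rw [← Submodule.orthogonalProjectionOnto_eq_zero_iff]
  refine c.repr.map_eq_zero_iff.1 (lp.ext (funext fun k => ?_))
  have hk : (c k : H) ∈ w := hvw ⟨c k, by rw [hc]; exact k.2, rfl⟩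
  have hik : (⟨c k, hk⟩ : w) ≠ i := by
    rintro rfl
    exact hi (by rw [hb]; exact (c k).2)
  have horth := b.orthonormal.2 hik
  rw [hb] at horth
  simpa [c.repr_apply_apply, hb] using horth

end HilbertBases

section PolarDecomposition

variable {A : Type*} [CStarAlgebra A] [PartialOrder A] [StarOrderedRing A]

-- Approximate polar decomposition `|a| ≈ c a`: a C⋆-algebra contains no sign of `a`, so `c` is the
-- regularised sign `a / (|a| + ε)`.
lemma exists_norm_le_one_norm_mul_sub_abs_le {a : A} (ha : IsSelfAdjoint a) {ε : ℝ}
    (hε : 0 < ε) : ∃ c : A, ‖c‖ ≤ 1 ∧ ‖c * a - CFC.abs a‖ ≤ ε := by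
  have hden : ∀ t : ℝ, |t| + ε ≠ 0 := fun t => by positivity
  have hcont : Continuous fun t : ℝ => t / (|t| + ε) := by fun_prop (disch := exact hden _)
  refine ⟨cfc (fun t : ℝ => t / (|t| + ε)) a, norm_cfc_le zero_le_one fun t _ => ?_, ?_⟩
  · rw [norm_div, Real.norm_eq_abs, Real.norm_of_nonneg (by positivity)]
    exact div_le_one_of_le₀ (by linarith) (by positivity)
  · have hdiff : cfc (fun t : ℝ => t / (|t| + ε)) a * a - CFC.abs a
        = cfc (fun t : ℝ => t / (|t| + ε) * t - ‖t‖) a := by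
      rw [cfc_sub _ _ a, cfc_mul _ _ a hcont.continuousOn, cfc_id' ℝ a, CFC.abs_eq_cfc_norm a]
    rw [hdiff]
    refine norm_cfc_le hε.le fun t _ => ?_
    have : t / (|t| + ε) * t - ‖t‖ = -(|t| / (|t| + ε) * ε) := by
      have := hden t
      rw [Real.norm_eq_abs]
      field_simp
      rw [← sq_abs]
      ring
    rw [this, norm_neg, Real.norm_of_nonneg (by positivity)]
    exact mul_le_of_le_one_left hε.le (div_le_one_of_le₀ (by linarith) (by positivity))

end PolarDecomposition

section TraceNorm

variable {H : Type*} [NormedAddCommGroup H] [InnerProductSpace ℂ H]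

/-- The trace norm of `T` is at most `C`. The trace norm is the supremum of the sums
`∑ |⟪eᵢ, T fᵢ⟫|` over finite orthonormal families, so `IsTraceClass T` unfolds to
`∃ C, TraceNormLE C T`. -/
def TraceNormLE (C : ℝ) (T : H →L[ℂ] H) : Prop :=
  ∀ (n : ℕ) (e f : Fin n → H), Orthonormal ℂ e → Orthonormal ℂ f →
    ∑ i, ‖⟪e i, T (f i)⟫‖ ≤ C

namespace TraceNormLE

variable {C C' : ℝ} {S T : H →L[ℂ] H}

lemma mono (hT : TraceNormLE C T) (hC : C ≤ C') : TraceNormLE C' T :=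
  fun n e f he hf => (hT n e f he hf).trans hC

lemma nonneg (hT : TraceNormLE C T) : 0 ≤ C := by
  simpa using hT 0 Fin.elim0 Fin.elim0 (.of_isEmpty _) (.of_isEmpty _)

lemma sum_le (hT : TraceNormLE C T) {ι : Type*} {e f : ι → H} (he : Orthonormal ℂ e)
    (hf : Orthonormal ℂ f) (s : Finset ι) : ∑ i ∈ s, ‖⟪e i, T (f i)⟫‖ ≤ C := by
  have hinj := Subtype.val_injective.comp s.equivFin.symm.injective
  refine le_of_eq_of_le ?_ (hT _ _ _ (he.comp _ hinj) (hf.comp _ hinj))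
  rw [← s.sum_coe_sort]
  exact (s.equivFin.symm.sum_comp fun i : s => ‖⟪e i, T (f i)⟫‖).symm

protected lemma add (hS : TraceNormLE C S) (hT : TraceNormLE C' T) : TraceNormLE (C + C') (S + T) :=
  fun n e f he hf =>
    calc ∑ i, ‖⟪e i, (S + T) (f i)⟫‖
        ≤ ∑ i, (‖⟪e i, S (f i)⟫‖ + ‖⟪e i, T (f i)⟫‖) := by
          gcongr with i
          rw [add_apply, inner_add_right]
          exact norm_add_le _ _
      _ ≤ C + C' := by
          rw [Finset.sum_add_distrib]
          exact add_le_add (hS n e f he hf) (hT n e f he hf)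

protected lemma smul (c : ℂ) (hT : TraceNormLE C T) : TraceNormLE (‖c‖ * C) (c • T) :=
  fun n e f he hf => by
    simpa [inner_smul_right, ← Finset.mul_sum] using
      mul_le_mul_of_nonneg_left (hT n e f he hf) (norm_nonneg c)

lemma isClosed_setOf (C : ℝ) : IsClosed {T : H →L[ℂ] H | TraceNormLE C T} := by
  simp only [TraceNormLE, Set.ofPred_forall]
  exact isClosed_iInter fun n => isClosed_iInter fun e => isClosed_iInter fun f =>
    isClosed_iInter fun _ => isClosed_iInter fun _ => isClosed_le (by fun_prop) continuous_const

lemma summable_norm_inner {ι : Type*} (hT : TraceNormLE C T) (b : HilbertBasis ι ℂ H) :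
    Summable fun i => ‖⟪b i, T (b i)⟫‖ :=
  summable_of_sum_le (fun _ => norm_nonneg _) (hT.sum_le b.orthonormal b.orthonormal)

lemma norm_traceAlong_le {ι : Type*} (hT : TraceNormLE C T) (b : HilbertBasis ι ℂ H) :
    ‖traceAlong b T‖ ≤ C :=
  (norm_tsum_le_tsum_norm (hT.summable_norm_inner b)).trans
    (Real.tsum_le_of_sum_le (fun _ => norm_nonneg _) (hT.sum_le b.orthonormal b.orthonormal))

variable [CompleteSpace H]

protected lemma star (hT : TraceNormLE C T) : TraceNormLE C (star T) := fun n e f he hf => by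
  simpa [star_eq_adjoint, adjoint_inner_right, norm_inner_symm] using hT n f e hf he

lemma unitary_mul (hT : TraceNormLE C T) (u : unitary (H →L[ℂ] H)) :
    TraceNormLE C ((u : H →L[ℂ] H) * T) :=
  fun n e f he hf => by
    have := hT n _ f (he.comp_linearIsometryEquiv (Unitary.linearIsometryEquiv (star u))) hf
    refine le_of_eq_of_le (Finset.sum_congr rfl fun i _ => congrArg norm ?_) this
    exact (adjoint_inner_left (u : H →L[ℂ] H) (T (f i)) (e i)).symm

lemma mul_left (S : H →L[ℂ] H) (hT : TraceNormLE C T) : TraceNormLE (2 * ‖S‖ * C) (S * T) := by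
  obtain ⟨u, c, hS, hc⟩ := CStarAlgebra.exists_sum_four_unitary S
  have hterm (i : Fin 4) : TraceNormLE (‖S‖ / 2 * C) (c i • ((u i : H →L[ℂ] H) * T)) :=
    ((hT.unitary_mul (u i)).smul (c i)).mono (mul_le_mul_of_nonneg_right (hc i) hT.nonneg)
  have hsum := (((hterm 0).add (hterm 1)).add (hterm 2)).add (hterm 3)
  convert hsum using 1
  · ring
  · simp [hS, Fin.sum_univ_four, add_mul]

protected lemma abs (hT : TraceNormLE C T) (hTsa : IsSelfAdjoint T) :
    TraceNormLE (2 * C) (CFC.abs T) := by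
  refine (isClosed_setOf (2 * C)).closure_subset (Metric.mem_closure_iff.2 fun ε hε => ?_)
  obtain ⟨c, hc, hcT⟩ := exists_norm_le_one_norm_mul_sub_abs_le hTsa (half_pos hε)
  refine ⟨c * T, (hT.mul_left c).mono ?_, ?_⟩
  · nlinarith [hT.nonneg]
  · rw [dist_comm, dist_eq_norm]
    linarith

end TraceNormLE

end TraceNorm

section TraceClass

variable {H : Type*} [NormedAddCommGroup H] [InnerProductSpace ℂ H]

namespace IsTraceClass

variable {S T : H →L[ℂ] H}

lemma summable_inner {ι : Type*} (hT : IsTraceClass T) (b : HilbertBasis ι ℂ H) :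
    Summable fun i => ⟪b i, T (b i)⟫ :=
  let ⟨_, hC⟩ := hT
  .of_norm (TraceNormLE.summable_norm_inner hC b)

protected lemma add (hS : IsTraceClass S) (hT : IsTraceClass T) : IsTraceClass (S + T) :=
  let ⟨_, hC⟩ := hS
  let ⟨_, hC'⟩ := hT
  ⟨_, TraceNormLE.add hC hC'⟩

protected lemma smul (c : ℂ) (hT : IsTraceClass T) : IsTraceClass (c • T) :=
  let ⟨_, hC⟩ := hT
  ⟨_, TraceNormLE.smul c hC⟩

variable [CompleteSpace H]

protected lemma star (hT : IsTraceClass T) : IsTraceClass (star T) :=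
  let ⟨_, hC⟩ := hT
  ⟨_, TraceNormLE.star hC⟩

lemma mul_left (S : H →L[ℂ] H) (hT : IsTraceClass T) : IsTraceClass (S * T) :=
  let ⟨_, hC⟩ := hT
  ⟨_, TraceNormLE.mul_left S hC⟩

protected lemma abs (hT : IsTraceClass T) (hTsa : IsSelfAdjoint T) : IsTraceClass (CFC.abs T) :=
  let ⟨_, hC⟩ := hT
  ⟨_, TraceNormLE.abs hC hTsa⟩

protected lemma realPart (hT : IsTraceClass T) : IsTraceClass (realPart T : H →L[ℂ] H) := by
  rw [realPart_apply_coe, ← Complex.coe_smul]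
  exact (hT.add hT.star).smul _

protected lemma imaginaryPart (hT : IsTraceClass T) :
    IsTraceClass (imaginaryPart T : H →L[ℂ] H) := by
  rw [imaginaryPart_apply_coe, ← Complex.coe_smul, sub_eq_add_neg,
    ← neg_one_smul ℂ (star T)]
  exact ((hT.add (hT.star.smul _)).smul _).smul _

end IsTraceClass

lemma traceAlong_add {ι : Type*} (b : HilbertBasis ι ℂ H) {S T : H →L[ℂ] H}
    (hS : IsTraceClass S) (hT : IsTraceClass T) :
    traceAlong b (S + T) = traceAlong b S + traceAlong b T := by
  simp only [traceAlong, add_apply, inner_add_right]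
  exact (hS.summable_inner b).tsum_add (hT.summable_inner b)

lemma traceAlong_smul {ι : Type*} (b : HilbertBasis ι ℂ H) (c : ℂ) (T : H →L[ℂ] H) :
    traceAlong b (c • T) = c * traceAlong b T := by
  simp only [traceAlong, smul_apply, inner_smul_right, tsum_mul_left]

variable [CompleteSpace H] {ι κ : Type*} (b : HilbertBasis ι ℂ H) (c : HilbertBasis κ ℂ H)

lemma traceAlong_eq_of_isSelfAdjoint {T : H →L[ℂ] H} (hTsa : IsSelfAdjoint T)
    (hT : IsTraceClass T) : traceAlong b T = traceAlong c T := by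
  have habs := hT.abs hTsa
  have hpos : 0 ≤ CFC.abs T + T := by
    rw [CFC.abs_add_self T hTsa]
    exact smul_nonneg zero_le_two (CFC.posPart_nonneg T)
  have hsum := traceAlong_eq_of_nonneg b c hpos
  rw [traceAlong_add b habs hT, traceAlong_add c habs hT,
    traceAlong_eq_of_nonneg b c (CFC.abs_nonneg T)] at hsum
  exact add_left_cancel hsum

theorem traceAlong_eq {T : H →L[ℂ] H} (hT : IsTraceClass T) :
    traceAlong b T = traceAlong c T := by
  rw [← realPart_add_I_smul_imaginaryPart T, traceAlong_add b hT.realPart (hT.imaginaryPart.smul _),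
    traceAlong_add c hT.realPart (hT.imaginaryPart.smul _), traceAlong_smul, traceAlong_smul,
    traceAlong_eq_of_isSelfAdjoint b c (realPart T).2 hT.realPart,
    traceAlong_eq_of_isSelfAdjoint b c (imaginaryPart T).2 hT.imaginaryPart]

/-- The bounded functional `T ↦ tr (T X)` attached to a trace class operator `X`, the trace being
computed in the basis `b`. -/
def traceMul {X : H →L[ℂ] H} (hX : IsTraceClass X) : (H →L[ℂ] H) →L[ℂ] ℂ :=
  LinearMap.mkContinuousOfExistsBound
    { toFun T := traceAlong b (T * X)
      map_add' S T := by rw [add_mul, traceAlong_add b (hX.mul_left S) (hX.mul_left T)]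
      map_smul' c T := by rw [smul_mul_assoc, traceAlong_smul, RingHom.id_apply, smul_eq_mul] }
    (let ⟨C, hC⟩ := hX
    ⟨2 * C, fun T => (TraceNormLE.norm_traceAlong_le (TraceNormLE.mul_left T hC) b).trans_eq
      (mul_right_comm _ _ _)⟩)

end TraceClass

section Density

variable {H : Type*} [NormedAddCommGroup H] [InnerProductSpace ℂ H]

lemma traceNormLE_of_apply_rankOne (φ : (H →L[ℂ] H) →L[ℂ] ℂ) {X : H →L[ℂ] H}
    (hX : ∀ x y, ⟪x, X y⟫ = φ (rankOne ℂ y x)) : TraceNormLE ‖φ‖ X := by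
  intro n e f he hf
  choose θ hθ hphase using fun i => RCLike.exists_norm_eq_mul_self ⟪e i, X (f i)⟫
  set S := ∑ i, θ i • rankOne ℂ (f i) (e i) with hS
  have hφS : φ S = ((∑ i, ‖⟪e i, X (f i)⟫‖ : ℝ) : ℂ) := by
    simp only [hS, map_sum, map_smul, ← hX, smul_eq_mul, Complex.ofReal_sum]
    exact Finset.sum_congr rfl fun i _ => (hphase i).symm
  calc ∑ i, ‖⟪e i, X (f i)⟫‖ = ‖φ S‖ := by
        rw [hφS, Complex.norm_of_nonneg (Finset.sum_nonneg fun i _ => norm_nonneg _)]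
    _ ≤ ‖φ‖ * 1 := φ.le_opNorm_of_le
        (norm_sum_smul_rankOne_le_one he hf (fun i => (hθ i).le) Finset.univ)
    _ = ‖φ‖ := mul_one _

theorem exists_isTraceClass_inner_eq_apply_rankOne [CompleteSpace H] (φ : (H →L[ℂ] H) →L[ℂ] ℂ) :
    ∃ X : H →L[ℂ] H, IsTraceClass X ∧ ∀ x y, ⟪x, X y⟫ = φ (rankOne ℂ y x) := by
  let B : H →L⋆[ℂ] H →L[ℂ] ℂ := (compL ℂ H (H →L[ℂ] H) ℂ φ).comp (rankOne ℂ).flip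
  have hX (x y : H) :
      ⟪x, adjoint (InnerProductSpace.continuousLinearMapOfBilin B) y⟫ = φ (rankOne ℂ y x) := by
    rw [adjoint_inner_right, InnerProductSpace.continuousLinearMapOfBilin_apply]
    rfl
  exact ⟨_, ⟨_, traceNormLE_of_apply_rankOne φ hX⟩, hX⟩

end Density

section TensorProducts

variable {H K : Type u} [NormedAddCommGroup H] [InnerProductSpace ℂ H]
  [NormedAddCommGroup K] [InnerProductSpace ℂ K]

namespace HilbertTensorProduct

variable (J : HilbertTensorProduct H K)

lemma norm_tmul (x y : H) : ‖J.tmul x y‖ = ‖x‖ * ‖y‖ := by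
  have h := J.inner_tmul x y x y
  simp only [inner_self_eq_norm_sq_to_K, ← mul_pow] at h
  exact (sq_eq_sq₀ (norm_nonneg _) (by positivity)).1 (by exact_mod_cast h)

lemma ext_inner_tmul {z w : K} (h : ∀ x y, ⟪z, J.tmul x y⟫ = ⟪w, J.tmul x y⟫) : z = w := by
  refine innerSL_inj.1 (ContinuousLinearMap.ext_on J.dense_span ?_)
  rintro _ ⟨⟨x, y⟩, rfl⟩
  exact h x y

/-- The tensor product of vectors as a bounded bilinear map. -/
def tmulL : H →L[ℂ] H →L[ℂ] K :=
  J.tmul.mkContinuous₂ 1 fun x y => by rw [J.norm_tmul, one_mul]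

lemma orthonormal_tmul {ι κ : Type*} {e : ι → H} {f : κ → H} (he : Orthonormal ℂ e)
    (hf : Orthonormal ℂ f) : Orthonormal ℂ fun k : ι × κ => J.tmul (e k.1) (f k.2) := by
  classical
  rw [orthonormal_iff_ite] at he hf ⊢
  rintro ⟨i, j⟩ ⟨i', j'⟩
  simp [J.inner_tmul, he, hf, ← ite_and, and_comm]

variable {ι κ : Type*} (b : HilbertBasis ι ℂ H) (c : HilbertBasis κ ℂ H)

lemma orthogonal_span_tmul_eq_bot :
    (Submodule.span ℂ (Set.range fun k : ι × κ => J.tmul (b k.1) (c k.2)))ᗮ = ⊥ := by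
  have hb := Submodule.dense_iff_topologicalClosure_eq_top.2 b.dense_span
  have hc := Submodule.dense_iff_topologicalClosure_eq_top.2 c.dense_span
  refine (Submodule.eq_bot_iff _).2 fun z hz => ?_
  have hzero : (compL ℂ H K ℂ (innerSL ℂ z)).comp J.tmulL = 0 := by
    refine ContinuousLinearMap.ext_on hb ?_
    rintro _ ⟨i, rfl⟩
    refine ContinuousLinearMap.ext_on hc ?_
    rintro _ ⟨j, rfl⟩
    exact Submodule.mem_orthogonal' _ _ |>.1 hz _ (Submodule.subset_span ⟨(i, j), rfl⟩)
  refine J.ext_inner_tmul fun x y => ?_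
  rw [inner_zero_left]
  exact DFunLike.congr_fun (DFunLike.congr_fun hzero x) y

/-- The product basis `(bᵢ ⊗ cⱼ)` of `𝔥 ⊗ 𝔥`. -/
def hilbertBasis [CompleteSpace K] : HilbertBasis (ι × κ) ℂ K :=
  .mkOfOrthogonalEqBot (J.orthonormal_tmul b.orthonormal c.orthonormal)
    (J.orthogonal_span_tmul_eq_bot b c)

lemma hilbertBasis_apply [CompleteSpace K] (k : ι × κ) :
    J.hilbertBasis b c k = J.tmul (b k.1) (c k.2) := by
  simp [hilbertBasis]

end HilbertTensorProduct

namespace OperatorTensor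

variable (J : OperatorTensor H K)

lemma op_ext {S T : K →L[ℂ] K} (h : ∀ x y, S (J.tmul x y) = T (J.tmul x y)) : S = T := by
  refine ContinuousLinearMap.ext_on J.dense_span ?_
  rintro _ ⟨⟨x, y⟩, rfl⟩
  exact h x y

/-- The tensor product of operators as a bilinear map. -/
def opₗ : (H →L[ℂ] H) →ₗ[ℂ] (H →L[ℂ] H) →ₗ[ℂ] (K →L[ℂ] K) :=
  LinearMap.mk₂ ℂ J.op
    (fun _ _ _ => J.op_ext fun _ _ => by simp [J.op_tmul])
    (fun _ _ _ => J.op_ext fun _ _ => by simp [J.op_tmul])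
    (fun _ _ _ => J.op_ext fun _ _ => by simp [J.op_tmul])
    (fun _ _ _ => J.op_ext fun _ _ => by simp [J.op_tmul])

lemma op_mul (S S' T T' : H →L[ℂ] H) : J.op (S * S') (T * T') = J.op S T * J.op S' T' :=
  J.op_ext fun _ _ => by simp [J.op_tmul]

lemma op_rankOne (x y x' y' : H) :
    J.op (rankOne ℂ x y) (rankOne ℂ x' y') = rankOne ℂ (J.tmul x x') (J.tmul y y') :=
  J.op_ext fun _ _ => by simp [J.op_tmul, J.inner_tmul, smul_smul, mul_comm]

lemma op_rankOne_mem_compactSpan (x y x' y' : H) :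
    J.op (rankOne ℂ x y) (rankOne ℂ x' y') ∈ J.compactSpan :=
  Submodule.subset_span ⟨_, _, isCompactOperator_rankOne x y, isCompactOperator_rankOne x' y', rfl⟩

variable [CompleteSpace H] [CompleteSpace K]

lemma op_star (S T : H →L[ℂ] H) : J.op (star S) (star T) = star (J.op S T) := by
  refine J.op_ext fun x y => J.ext_inner_tmul fun x' y' => ?_
  simp only [star_eq_adjoint, adjoint_inner_left, J.op_tmul, J.inner_tmul]

/-- The representation `S ↦ S ⊗ 1` of `B(𝔥)`. -/
def opLeft : (H →L[ℂ] H) →⋆ₙₐ[ℂ] (K →L[ℂ] K) where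
  __ := J.opₗ.flip 1
  map_zero' := map_zero (J.opₗ.flip 1)
  map_mul' S S' := by simpa using! J.op_mul S S' 1 1
  map_star' S := by simpa using! J.op_star S 1

/-- The representation `T ↦ 1 ⊗ T` of `B(𝔥)`. -/
def opRight : (H →L[ℂ] H) →⋆ₙₐ[ℂ] (K →L[ℂ] K) where
  __ := J.opₗ 1
  map_zero' := map_zero (J.opₗ 1)
  map_mul' T T' := by simpa using! J.op_mul 1 1 T T'
  map_star' T := by simpa using! J.op_star 1 T

lemma norm_op_le (S T : H →L[ℂ] H) : ‖J.op S T‖ ≤ ‖S‖ * ‖T‖ :=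
  calc ‖J.op S T‖ = ‖J.opLeft S * J.opRight T‖ := by
        simpa using! congrArg norm (J.op_mul S 1 1 T)
    _ ≤ ‖J.opLeft S‖ * ‖J.opRight T‖ := norm_mul_le _ _
    _ ≤ ‖S‖ * ‖T‖ := mul_le_mul (NonUnitalStarAlgHom.norm_apply_le _ S)
        (NonUnitalStarAlgHom.norm_apply_le _ T) (norm_nonneg _) (norm_nonneg _)

end OperatorTensor

end TensorProducts

section OrthogonalProjections

lemma isOrthoProj_rankOne {x y : E} (hx : ‖x‖ = 1) (hy : y = x ∨ y = 0) :
    IsOrthoProj (rankOne ℂ x y) := by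
  rcases hy with rfl | rfl
  · exact ⟨InnerProductSpace.isIdempotentElem_rankOne_self hx, by simp [isSelfAdjoint_iff']⟩
  · simp [IsOrthoProj, IsIdempotentElem]

lemma IsOrthoProj.exists_hilbertBasis_apply_eq_self_or_eq_zero {p : E →L[ℂ] E}
    (hp : IsOrthoProj p) :
    ∃ (w : Set E) (b : HilbertBasis w ℂ E), ∀ i, p (b i) = b i ∨ p (b i) = 0 := by
  obtain ⟨hrange, hproj⟩ := isStarProjection_iff_eq_starProjection_range.1 ⟨hp.1, hp.2⟩
  have : CompleteSpace (LinearMap.range p.toLinearMap) :=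
    (IsIdempotentElem.isClosed_range hp.1).completeSpace_coe
  obtain ⟨w, b, hb⟩ := exists_hilbertBasis_mem_or_mem_orthogonal (LinearMap.range p.toLinearMap)
  refine ⟨w, b, fun i => ?_⟩
  rw [hproj]
  exact (hb i).imp Submodule.starProjection_eq_self_iff.2
    (Submodule.starProjection_apply_eq_zero_iff _).2

end OrthogonalProjections

section DecoherenceFunctionals

variable {d : (E →L[ℂ] E) → (E →L[ℂ] E) → ℂ}

lemma DFCompletelyAdditive.hasSum_rankOne (hd : DFCompletelyAdditive d) {p q : E →L[ℂ] E}
    (hp : IsOrthoProj p) (hq : IsOrthoProj q) {ι : Type u} (b : HilbertBasis ι ℂ E)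
    (hb : ∀ i, p (b i) = b i ∨ p (b i) = 0) :
    HasSum (fun i => d (rankOne ℂ (b i) (p (b i))) q) (d p q) := by
  refine hd ι _ p q (fun i => isOrthoProj_rankOne (b.orthonormal.1 i) (hb i)) hp hq
    (fun i j hij => ?_) fun x => ?_
  · rw [mul_def, InnerProductSpace.rankOne_comp_rankOne]
    rcases hb i with h | h <;> simp [h, b.orthonormal.2 hij]
  · convert b.hasSum_repr (p x) using 2 with i
    rw [InnerProductSpace.rankOne_apply, b.repr_apply_apply]
    exact congrArg (· • b i) (hp.2.isSymmetric _ _)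

lemma IsDecoherenceFunctional.completelyAdditive_flip (hd : IsDecoherenceFunctional d)
    (hca : DFCompletelyAdditive d) : DFCompletelyAdditive (flip d) := by
  intro ι p P q hp hP hq horth hsum
  change HasSum (fun i => d q (p i)) (d q P)
  simp only [hd.hermitian q _ hq hP, hd.hermitian q _ hq (hp _)]
  exact Complex.hasSum_conj'.2 (hca ι p P q hp hP hq horth hsum)

/-- The operator `X` satisfies `d(p, q) = tr ((p ⊗ q) X)` for projections `p`, `q` of rank at most
one. The trace is written as a matrix coefficient, since `(|x⟩⟨x'|) ⊗ (|y⟩⟨y'|)` is the rank one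
operator `|x ⊗ y⟩⟨x' ⊗ y'|`. -/
def RepresentsOnRankOne (J : OperatorTensor E G) (d : (E →L[ℂ] E) → (E →L[ℂ] E) → ℂ)
    (X : G →L[ℂ] G) : Prop :=
  ∀ x x' y y' : E, IsOrthoProj (rankOne ℂ x x') → IsOrthoProj (rankOne ℂ y y') →
    ⟪J.tmul x' y', X (J.tmul x y)⟫ = d (rankOne ℂ x x') (rankOne ℂ y y')

lemma IsTensorBounded.exists_representsOnRankOne {J : OperatorTensor E G}
    (h : IsTensorBounded J d) : ∃ X, IsTraceClass X ∧ RepresentsOnRankOne J d X := by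
  obtain ⟨D, -, hDd, β, hβD, C, hβC⟩ := h
  obtain ⟨φ, hφ, -⟩ := exists_extension_norm_eq J.compactSpan (β.mkContinuous C hβC)
  obtain ⟨X, hX, hXφ⟩ := exists_isTraceClass_inner_eq_apply_rankOne φ
  refine ⟨X, hX, fun x x' y y' hx hy => ?_⟩
  have hmem := J.op_rankOne_mem_compactSpan x x' y y'
  calc ⟪J.tmul x' y', X (J.tmul x y)⟫
      = φ (J.op (rankOne ℂ x x') (rankOne ℂ y y')) := by rw [hXφ, J.op_rankOne]
    _ = β ⟨_, hmem⟩ := hφ ⟨_, hmem⟩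
    _ = D (rankOne ℂ x x') (rankOne ℂ y y') :=
        hβD _ _ (isCompactOperator_rankOne x x') (isCompactOperator_rankOne y y') hmem
    _ = d (rankOne ℂ x x') (rankOne ℂ y y') := hDd _ _ hx hy

theorem RepresentsOnRankOne.eq_traceAlong {J : OperatorTensor E G} {X : G →L[ℂ] G}
    (hXd : RepresentsOnRankOne J d X) (hX : IsTraceClass X) (hleft : DFCompletelyAdditive d)
    (hright : DFCompletelyAdditive (flip d)) {ι : Type*} (bG : HilbertBasis ι ℂ G)
    {p q : E →L[ℂ] E} (hp : IsOrthoProj p) (hq : IsOrthoProj q) :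
    d p q = traceAlong bG (J.op p q * X) := by
  obtain ⟨v, b, hb⟩ := hp.exists_hilbertBasis_apply_eq_self_or_eq_zero
  obtain ⟨w, c, hc⟩ := hq.exists_hilbertBasis_apply_eq_self_or_eq_zero
  let P i := rankOne ℂ (b i) (p (b i))
  let Q j := rankOne ℂ (c j) (q (c j))
  have hP i : IsOrthoProj (P i) := isOrthoProj_rankOne (b.orthonormal.1 i) (hb i)
  have hQ j : IsOrthoProj (Q j) := isOrthoProj_rankOne (c.orthonormal.1 j) (hc j)
  have hself : IsSelfAdjoint (J.op p q) := by
    rw [isSelfAdjoint_iff, ← J.op_star, hp.2.star_eq, hq.2.star_eq]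
  have hdiag (k : v × w) : ⟪J.hilbertBasis b c k, (J.op p q * X) (J.hilbertBasis b c k)⟫
      = d (P k.1) (Q k.2) := by
    rw [← hXd _ _ _ _ (hP k.1) (hQ k.2), ← J.op_tmul, J.hilbertBasis_apply]
    exact (hself.isSymmetric _ _).symm
  have htrace : HasSum (fun k : v × w => d (P k.1) (Q k.2)) (traceAlong bG (J.op p q * X)) := by
    rw [traceAlong_eq bG (J.hilbertBasis b c) (hX.mul_left _), traceAlong]
    simpa only [hdiag] using ((hX.mul_left (J.op p q)).summable_inner (J.hilbertBasis b c)).hasSum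
  exact (hleft.hasSum_rankOne hp hq b hb).unique
    (htrace.prod_fiberwise fun i => hright.hasSum_rankOne hq (hP i) c hc)

lemma isTensorBounded_of_eq_traceAlong {J : OperatorTensor E G} {ι : Type*}
    (bG : HilbertBasis ι ℂ G) {X : G →L[ℂ] G} (hX : IsTraceClass X)
    (hd : ∀ p q : E →L[ℂ] E, IsOrthoProj p → IsOrthoProj q →
      d p q = traceAlong bG (J.op p q * X)) : IsTensorBounded J d := by
  let τ := traceMul bG hX
  refine ⟨J.opₗ.compr₂ τ.toLinearMap, ⟨‖τ‖, fun S T => ?_⟩, fun p q hp hq => (hd p q hp hq).symm,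
    τ.toLinearMap.domRestrict J.compactSpan, fun _ _ _ _ _ => rfl, ‖τ‖, fun S => τ.le_opNorm S⟩
  rw [mul_assoc]
  exact τ.le_opNorm_of_le (J.norm_op_le S T)

end DecoherenceFunctionals

theorem stmt_3_general (d : (E →L[ℂ] E) → (E →L[ℂ] E) → ℂ)
    (hleft : DFCompletelyAdditive d) (hright : DFCompletelyAdditive (flip d))
    (J : OperatorTensor E G) {ι : Type*} (bG : HilbertBasis ι ℂ G) :
    (∃ X : G →L[ℂ] G, IsTraceClass X ∧
        ∀ p q : E →L[ℂ] E, IsOrthoProj p → IsOrthoProj q →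
          d p q = traceAlong bG (J.op p q * X)) ↔ IsTensorBounded J d := by
  refine ⟨fun ⟨X, hX, hd⟩ => isTensorBounded_of_eq_traceAlong bG hX hd, fun h => ?_⟩
  obtain ⟨X, hX, hXd⟩ := h.exists_representsOnRankOne
  exact ⟨X, hX, fun p q hp hq => hXd.eq_traceAlong hX hleft hright bG hp hq⟩

/-- A completely additive decoherence functional `d` on a Hilbert
space of dimension `≠ 2` is representable as `d(p,q) = tr((p ⊗ q) 𝔛)` for ALL
projections `p, q`, with `𝔛` trace class on `𝔥 ⊗ 𝔥`, iff `d` is tensor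
bounded. -/
theorem stmt_3 (hdim : Module.rank ℂ E ≠ 2)
    (d : (E →L[ℂ] E) → (E →L[ℂ] E) → ℂ)
    (hd : IsDecoherenceFunctional d) (hca : DFCompletelyAdditive d)
    (J : OperatorTensor E G) {ι : Type u} (bG : HilbertBasis ι ℂ G) :
    (∃ X : G →L[ℂ] G, IsTraceClass X ∧
        ∀ p q : E →L[ℂ] E, IsOrthoProj p → IsOrthoProj q →
          d p q = traceAlong bG (J.op p q * X)) ↔ IsTensorBounded J d :=
  stmt_3_general d hca (hd.completelyAdditive_flip hca) J bG
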